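/- Let G be a finite connected simple graph with an injective edge-weight function w, and let T be the (unique) minimum-weight spanning tree of G. Then for every edge e of G, e is not an edge of T if and only if there exists a cycle C in G containing e such that every edge of C has weight at most w(e). -/

import Mathlib

open SimpleGraph Finset

variable {V : Type*}

/-- `T` is a spanning tree of `G`: a subgraph on the same vertex set that is a tree. -/
def IsSpanningTree (G T : SimpleGraph V) : Prop :=
  T ≤ G ∧ T.IsTree

/-- The total weight of the edges of a graph. -/
noncomputable def totalWeight [Fintype V] (T : SimpleGraph V) (w : Sym2 V → ℝ) : ℝ :=
  ∑ e ∈ T.edgeSet.toFinite.toFinset, w e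

/-- `T` is a minimum-weight spanning tree of `G` with respect to `w`. -/
def IsMinSpanningTree [Fintype V] (G T : SimpleGraph V) (w : Sym2 V → ℝ) : Prop :=
  IsSpanningTree G T ∧
    ∀ T' : SimpleGraph V, IsSpanningTree G T' → totalWeight T w ≤ totalWeight T' w

/-! A minimum spanning tree `T` is cut optimal: if deleting an edge `f` of `T` separates the ends
of an edge `e` of `G`, then exchanging `f` for `e` yields another spanning tree, so `w f ≤ w e`.
The two implications are read off from this condition.

* If `e ∉ T`, then every edge of the tree path joining the ends of `e` separates these ends, so `e`
  is a heaviest edge of its fundamental cycle.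
* If `e ∈ T` and `C` is a cycle through `e`, then `C` crosses the cut given by `T - e` a second
  time, in an edge which is at least as heavy as `e` and hence, by injectivity, strictly heavier.
-/

theorem reachable_deleteEdges_left_or_right {H : SimpleGraph V} {a b z : V}
    (hza : H.Reachable z a) :
    (H.deleteEdges {s(a, b)}).Reachable z a ∨ (H.deleteEdges {s(a, b)}).Reachable z b := by
  by_contra! ⟨hna, hnb⟩
  obtain ⟨p⟩ := hza
  obtain ⟨d, -, hfst, hsnd⟩ :=
    p.exists_boundary_dart {u | (H.deleteEdges {s(a, b)}).Reachable z u} .rfl hna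
  have hd : s(d.fst, d.snd) = s(a, b) := by
    by_contra hne
    exact hsnd (hfst.trans (deleteEdges_adj.2 ⟨d.adj, hne⟩).reachable)
  rcases Sym2.eq_iff.1 hd with ⟨h, -⟩ | ⟨h, -⟩
  · exact hna (h ▸ hfst)
  · exact hnb (h ▸ hfst)

theorem connected_deleteEdges_sup_edge {H : SimpleGraph V} (hH : H.Connected) {f : Sym2 V}
    {x y : V} (hsep : ¬ (H.deleteEdges {f}).Reachable x y) :
    (H.deleteEdges {f} ⊔ edge x y).Connected := by
  have hxy : (H.deleteEdges {f} ⊔ edge x y).Reachable x y := by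
    have hne : x ≠ y := fun h => hsep (h ▸ .rfl)
    exact Adj.reachable (Or.inr (by simp [edge_adj, hne]))
  -- Deleting `f` leaves at most two components, and `x` and `y` lie in different ones.
  have hcover (z : V) :
      (H.deleteEdges {f}).Reachable x z ∨ (H.deleteEdges {f}).Reachable y z := by
    induction f with | h a b => ?_
    have hends (v : V) := reachable_deleteEdges_left_or_right (b := b) (hH v a)
    rcases hends x with hx | hx <;> rcases hends y with hy | hy <;> rcases hends z with hz | hz
    all_goals first
      | exact absurd (hx.trans hy.symm) hsep
      | exact Or.inl (hx.trans hz.symm)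
      | exact Or.inr (hy.trans hz.symm)
  refine (connected_iff_exists_forall_reachable _).2 ⟨x, fun z => ?_⟩
  rcases hcover z with hz | hz
  · exact hz.mono le_sup_left
  · exact hxy.trans (hz.mono le_sup_left)

theorem isTree_deleteEdges_sup_edge {T : SimpleGraph V} (hT : T.IsTree) {f : Sym2 V} {x y : V}
    (hsep : ¬ (T.deleteEdges {f}).Reachable x y) : (T.deleteEdges {f} ⊔ edge x y).IsTree :=
  ⟨connected_deleteEdges_sup_edge hT.connected hsep,
    (hT.isAcyclic.anti (deleteEdges_le _)).sup_edge_of_not_reachable hsep⟩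

theorem not_reachable_deleteEdges_of_isPath {H : SimpleGraph V} (hH : H.IsAcyclic) {x y : V}
    {p : H.Walk x y} (hp : p.IsPath) {f : Sym2 V} (hf : f ∈ p.edges) :
    ¬ (H.deleteEdges {f}).Reachable x y := by
  intro hr
  obtain ⟨q, hq⟩ := hr.exists_isPath
  have hpq : p = q.mapLe (deleteEdges_le _) :=
    congrArg Subtype.val ((hH.subsingleton_path x y).elim ⟨p, hp⟩ ⟨_, hq.mapLe _⟩)
  rw [hpq, Walk.edges_mapLe_eq_edges] at hf
  simpa using q.edges_subset_edgeSet hf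

theorem isCycle_cons_mapLe {H G : SimpleGraph V} (hle : H ≤ G) {x y : V} {p : H.Walk x y}
    (hp : p.IsPath) (hyx : G.Adj y x) (hnadj : ¬ H.Adj y x) :
    (Walk.cons hyx (p.mapLe hle)).IsCycle := by
  refine (Walk.cons_isCycle_iff _ _).2 ⟨hp.mapLe _, fun h => hnadj ?_⟩
  rw [Walk.edges_mapLe_eq_edges] at h
  exact p.edges_subset_edgeSet h

theorem exists_ne_mem_edges_of_isCycle {G : SimpleGraph V} {a x y : V} {c : G.Walk a a}
    (hc : c.IsCycle) (hmem : s(x, y) ∈ c.edges) {S : Set V} (hx : x ∈ S) (hy : y ∉ S) :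
    ∃ u ∈ S, ∃ v ∉ S, s(u, v) ∈ c.edges ∧ s(u, v) ≠ s(x, y) := by
  let C : SimpleGraph V := fromEdgeSet {e | e ∈ c.edges}
  have hC : ∀ e ∈ c.edges, e ∈ C.edgeSet := fun e he => by
    rw [edgeSet_fromEdgeSet]
    exact ⟨he, G.not_isDiag_of_mem_edgeSet (c.edges_subset_edgeSet he)⟩
  obtain ⟨-, ⟨p⟩⟩ := adj_and_reachable_delete_edges_iff_exists_cycle.2
    ⟨a, c.transfer C hC, hc.transfer hC, by rwa [Walk.edges_transfer]⟩
  obtain ⟨d, -, hfst, hsnd⟩ := p.exists_boundary_dart S hx hy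
  have hd := d.adj
  rw [deleteEdges_adj, fromEdgeSet_adj] at hd
  exact ⟨d.fst, hfst, d.snd, hsnd, hd.1.1, hd.2⟩

/-- Cut optimality of `T` in `G` with respect to the weights `w`: every edge `f` of `T` weighs at
most as much as any edge of `G` whose ends are separated by deleting `f` from `T`. For a spanning
tree these are the edges of the fundamental cut of `f`. The condition compares single edges only,
so it makes sense on infinite graphs and for weights in any ordered type. -/
def IsCutOptimal {α : Type*} [LE α] (G T : SimpleGraph V) (w : Sym2 V → α) : Prop :=
  ∀ ⦃f⦄, f ∈ T.edgeSet → ∀ ⦃x y⦄, G.Adj x y →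
    ¬ (T.deleteEdges {f}).Reachable x y → w f ≤ w s(x, y)

namespace IsCutOptimal

variable {α : Type*} {G T : SimpleGraph V} {w : Sym2 V → α}

theorem exists_isCycle_forall_le [Preorder α] (h : IsCutOptimal G T w) (hT : IsSpanningTree G T)
    {e : Sym2 V} (he : e ∈ G.edgeSet) (heT : e ∉ T.edgeSet) :
    ∃ (a : V) (c : G.Walk a a), c.IsCycle ∧ e ∈ c.edges ∧ ∀ e' ∈ c.edges, w e' ≤ w e := by
  induction e with | h y x => ?_
  rw [mem_edgeSet] at he heT
  obtain ⟨p, hp⟩ := hT.2.connected.exists_isPath x y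
  refine ⟨y, .cons he (p.mapLe hT.1), isCycle_cons_mapLe hT.1 hp he heT, by simp, fun f hf => ?_⟩
  rw [Walk.edges_cons, Walk.edges_mapLe_eq_edges, List.mem_cons] at hf
  rcases hf with rfl | hf
  · exact le_rfl
  · have hsep := not_reachable_deleteEdges_of_isPath hT.2.isAcyclic hp hf
    exact h (p.edges_subset_edgeSet hf) he (mt Reachable.symm hsep)

theorem exists_ne_le_of_isCycle [LE α] (h : IsCutOptimal G T w) (hT : T.IsAcyclic) {a : V}
    {c : G.Walk a a} (hc : c.IsCycle) {e : Sym2 V} (hec : e ∈ c.edges) (heT : e ∈ T.edgeSet) :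
    ∃ f ∈ c.edges, f ≠ e ∧ w e ≤ w f := by
  induction e with | h x y => ?_
  have hsep : ¬ (T.deleteEdges {s(x, y)}).Reachable x y :=
    isBridge_iff.1 (isAcyclic_iff_forall_isBridge.1 hT heT)
  obtain ⟨u, hu, v, hv, huv, hne⟩ := exists_ne_mem_edges_of_isCycle hc hec
    (S := {z | (T.deleteEdges {s(x, y)}).Reachable x z}) .rfl hsep
  exact ⟨s(u, v), huv, hne, h heT (c.edges_subset_edgeSet huv) fun huv' => hv (hu.trans huv')⟩

end IsCutOptimal

theorem stmt_0_general {α : Type*} [PartialOrder α] {G T : SimpleGraph V} {w : Sym2 V → α}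
    (hT : IsSpanningTree G T) (hopt : IsCutOptimal G T w) (hw : Set.InjOn w G.edgeSet)
    {e : Sym2 V} (he : e ∈ G.edgeSet) :
    e ∉ T.edgeSet ↔
      ∃ (a : V) (c : G.Walk a a), c.IsCycle ∧ e ∈ c.edges ∧ ∀ e' ∈ c.edges, w e' ≤ w e := by
  refine ⟨hopt.exists_isCycle_forall_le hT he, ?_⟩
  rintro ⟨a, c, hc, hec, hmax⟩ heT
  obtain ⟨f, hfc, hfe, hef⟩ := hopt.exists_ne_le_of_isCycle hT.2.isAcyclic hc hec heT
  exact hfe (hw (c.edges_subset_edgeSet hfc) he ((hmax f hfc).antisymm hef))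

section Finite

variable [Fintype V] {G T : SimpleGraph V} {w : Sym2 V → ℝ}

theorem totalWeight_sup_edge {x y : V} (hne : x ≠ y) (hxy : ¬ T.Adj x y) :
    totalWeight (T ⊔ edge x y) w = totalWeight T w + w s(x, y) := by
  classical
  have hedges : (T ⊔ edge x y).edgeSet.toFinite.toFinset =
      insert s(x, y) T.edgeSet.toFinite.toFinset := by
    ext e
    simp [edgeSet_edge_of_ne hne]
  rw [totalWeight, hedges, sum_insert (by simpa using hxy), add_comm, totalWeight]

theorem totalWeight_deleteEdges_singleton {f : Sym2 V} (hf : f ∈ T.edgeSet) :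
    totalWeight (T.deleteEdges {f}) w = totalWeight T w - w f := by
  classical
  have hedges : (T.deleteEdges {f}).edgeSet.toFinite.toFinset =
      T.edgeSet.toFinite.toFinset.erase f := by
    ext e
    simp [and_comm]
  rw [totalWeight, hedges, sum_erase_eq_sub (by simpa using hf), totalWeight]

theorem IsMinSpanningTree.isCutOptimal (hT : IsMinSpanningTree G T w) : IsCutOptimal G T w := by
  intro f hf x y hxy hsep
  have hexchange : IsSpanningTree G (T.deleteEdges {f} ⊔ edge x y) :=
    ⟨sup_le ((deleteEdges_le _).trans hT.1.1) ((edge_le_iff G).2 (Or.inr hxy)),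
      isTree_deleteEdges_sup_edge hT.1.2 hsep⟩
  have hmin := hT.2 _ hexchange
  rw [totalWeight_sup_edge hxy.ne (mt Adj.reachable hsep),
    totalWeight_deleteEdges_singleton hf] at hmin
  linarith

end Finite

/-- For the minimum spanning tree `T` of a finite connected graph `G` with injective
edge weights, an edge `e` of `G` is not in `T` iff `e` lies on a cycle of `G` all of
whose edges have weight at most `w e`. -/
theorem stmt_0 [Fintype V] (G : SimpleGraph V) (hG : G.Connected)
    (w : Sym2 V → ℝ) (hw : Set.InjOn w G.edgeSet)
    (T : SimpleGraph V) (hT : IsMinSpanningTree G T w)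
    (e : Sym2 V) (he : e ∈ G.edgeSet) :
    e ∉ T.edgeSet ↔
      ∃ (a : V) (c : G.Walk a a), c.IsCycle ∧ e ∈ c.edges ∧
        ∀ e' ∈ c.edges, w e' ≤ w e :=
  stmt_0_general hT.1 hT.isCutOptimal hw he
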